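/- arXiv:2002.02876 — 6 statements merged into one kernel-verified Lean document; each statement's English description precedes it below -/
import Mathlib

section
/- Suppose ρ^w and ρ^b are monotone, certainty equivalent and translation invariant, that ϱ^w(0) and ϱ^b(0) are finite, and that the fair price interval is nonempty, i.e. −ϱ^b(0) ≤ ϱ^w(0). Define (in the extended reals) the super-hedging price p̄^w := inf{p ∈ ℝ : ∃ X ∈ H with F(ω) − X(ω) ≤ p for all ω ∈ Ω} and the sub-hedging price p̄^b := sup{p ∈ ℝ : ∃ X ∈ H with F(ω) + X(ω) ≥ p for all ω ∈ Ω}. Then the equal risk price p* := (ϱ^w(0) − ϱ^b(0))/2 lies in the no-arbitrage interval: p̄^b ≤ p* ≤ p̄^w. -/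
section Hedging

variable {Ω : Type*} {H : Set (Ω → ℝ)} {F : Ω → ℝ} {ρ : (Ω → ℝ) → ℝ} {p r : ℝ}

/-- The initial capitals from which some strategy in `H` covers the liability `F` in every
outcome. -/
def superHedgingCapitals (H : Set (Ω → ℝ)) (F : Ω → ℝ) : Set ℝ :=
  {p | ∃ X ∈ H, ∀ ω, F ω - X ω ≤ p}

/-- The debts that the payoff `F`, together with some strategy in `H`, repays in every outcome. -/
def subHedgingCapitals (H : Set (Ω → ℝ)) (F : Ω → ℝ) : Set ℝ :=
  {p | ∃ X ∈ H, ∀ ω, p ≤ F ω + X ω}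

/-- The super-hedging price of `F`, equal to `⊤` when `F` cannot be super-hedged. -/
noncomputable def superHedgingPrice (H : Set (Ω → ℝ)) (F : Ω → ℝ) : EReal :=
  sInf ((fun p : ℝ => (p : EReal)) '' superHedgingCapitals H F)

/-- The sub-hedging price of `F`, equal to `⊥` when `F` cannot be sub-hedged. -/
noncomputable def subHedgingPrice (H : Set (Ω → ℝ)) (F : Ω → ℝ) : EReal :=
  sSup ((fun p : ℝ => (p : EReal)) '' subHedgingCapitals H F)

/-- The risks, measured by `ρ`, that remain after hedging the liability `F` with a strategy in `H`
and no initial capital. Their infimum is the minimal risk at price `0`: the writer's for the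
liability `F`, the buyer's for the liability `-F`. -/
def residualRisks (ρ : (Ω → ℝ) → ℝ) (H : Set (Ω → ℝ)) (F : Ω → ℝ) : Set ℝ :=
  (fun X => ρ (F - X)) '' H

theorem neg_mem_superHedgingCapitals_neg (hp : p ∈ subHedgingCapitals H F) :
    -p ∈ superHedgingCapitals H (-F) := by
  obtain ⟨X, hX, hpX⟩ := hp
  refine ⟨X, hX, fun ω => ?_⟩
  rw [Pi.neg_apply]
  linarith [hpX ω]

theorem lowerBounds_residualRisks_subset (hmono : Monotone ρ) (hconst : ∀ c, ρ (fun _ => c) ≤ c) :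
    lowerBounds (residualRisks ρ H F) ⊆ lowerBounds (superHedgingCapitals H F) := by
  rintro r hr p ⟨X, hX, hXp⟩
  calc
    r ≤ ρ (F - X) := hr ⟨X, hX, rfl⟩
    _ ≤ ρ (fun _ => p) := hmono hXp
    _ ≤ p := hconst p

theorem coe_le_superHedgingPrice (hmono : Monotone ρ) (hconst : ∀ c, ρ (fun _ => c) ≤ c)
    (hr : r ∈ lowerBounds (residualRisks ρ H F)) : (r : EReal) ≤ superHedgingPrice H F := by
  refine le_sInf ?_
  rintro _ ⟨p, hp, rfl⟩
  exact EReal.coe_le_coe (lowerBounds_residualRisks_subset hmono hconst hr hp)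

theorem subHedgingPrice_le_coe_neg (hmono : Monotone ρ) (hconst : ∀ c, ρ (fun _ => c) ≤ c)
    (hr : r ∈ lowerBounds (residualRisks ρ H (-F))) :
    subHedgingPrice H F ≤ ((-r : ℝ) : EReal) := by
  refine sSup_le ?_
  rintro _ ⟨p, hp, rfl⟩
  exact EReal.coe_le_coe <| le_neg_of_le_neg <|
    lowerBounds_residualRisks_subset hmono hconst hr (neg_mem_superHedgingCapitals_neg hp)

theorem stmt_1_general {ρw ρb : (Ω → ℝ) → ℝ} {mw mb : ℝ}
    (hmonow : Monotone ρw) (hmonob : Monotone ρb)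
    (hconstw : ∀ c, ρw (fun _ => c) ≤ c) (hconstb : ∀ c, ρb (fun _ => c) ≤ c)
    (hmw : IsGLB (residualRisks ρw H F) mw) (hmb : IsGLB (residualRisks ρb H (-F)) mb)
    (hp : p ∈ Set.Icc (-mb) mw) :
    (p : EReal) ∈ Set.Icc (subHedgingPrice H F) (superHedgingPrice H F) :=
  ⟨(subHedgingPrice_le_coe_neg hmonob hconstb hmb.1).trans (EReal.coe_le_coe hp.1),
    (EReal.coe_le_coe hp.2).trans (coe_le_superHedgingPrice hmonow hconstw hmw.1)⟩

end Hedging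

/-- For monotone, certainty equivalent and translation invariant risk
measures with finite minimal risks at price 0 and a nonempty fair price interval, the
equal risk price `(ϱw 0 - ϱb 0)/2` lies in the no-arbitrage interval determined by the
sub-hedging and super-hedging prices (taken in the extended reals). -/
theorem stmt_1
    (Ω : Type*) [Nonempty Ω]
    (H : Set (Ω → ℝ)) (hH : H.Nonempty)
    (F : Ω → ℝ)
    (ρw ρb : (Ω → ℝ) → ℝ)
    (hMonW : ∀ X Y : Ω → ℝ, (∀ ω, X ω ≤ Y ω) → ρw X ≤ ρw Y)
    (hMonB : ∀ X Y : Ω → ℝ, (∀ ω, X ω ≤ Y ω) → ρb X ≤ ρb Y)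
    (hCEw : ∀ c : ℝ, ρw (fun _ => c) = c)
    (hCEb : ∀ c : ℝ, ρb (fun _ => c) = c)
    (hTIw : ∀ (Y : Ω → ℝ) (c : ℝ), ρw (fun ω => Y ω + c) = ρw Y + c)
    (hTIb : ∀ (Y : Ω → ℝ) (c : ℝ), ρb (fun ω => Y ω + c) = ρb Y + c)
    (ϱw ϱb : ℝ → ℝ)
    (hϱw : ∀ p : ℝ, ϱw p = sInf ((fun X : Ω → ℝ => ρw (fun ω => F ω - X ω - p)) '' H))
    (hϱb : ∀ p : ℝ, ϱb p = sInf ((fun X : Ω → ℝ => ρb (fun ω => -F ω - X ω + p)) '' H))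
    (hFinw : BddBelow ((fun X : Ω → ℝ => ρw (fun ω => F ω - X ω - (0:ℝ))) '' H))
    (hFinb : BddBelow ((fun X : Ω → ℝ => ρb (fun ω => -F ω - X ω + (0:ℝ))) '' H))
    (hFPI : -ϱb 0 ≤ ϱw 0) :
    sSup ((fun p : ℝ => (p : EReal)) ''
        {p : ℝ | ∃ X ∈ H, ∀ ω, p ≤ F ω + X ω})
      ≤ (((ϱw 0 - ϱb 0) / 2 : ℝ) : EReal) ∧
    (((ϱw 0 - ϱb 0) / 2 : ℝ) : EReal)
      ≤ sInf ((fun p : ℝ => (p : EReal)) ''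
        {p : ℝ | ∃ X ∈ H, ∀ ω, F ω - X ω ≤ p}) := by
  have hmw : IsGLB (residualRisks ρw H F) (ϱw 0) := by
    rw [hϱw]
    simp only [sub_zero] at hFinw ⊢
    exact isGLB_csInf (hH.image _) hFinw
  have hmb : IsGLB (residualRisks ρb H (-F)) (ϱb 0) := by
    rw [hϱb]
    simp only [add_zero] at hFinb ⊢
    exact isGLB_csInf (hH.image _) hFinb
  have hfair : (ϱw 0 - ϱb 0) / 2 ∈ Set.Icc (-ϱb 0) (ϱw 0) := by
    constructor <;> linarith
  exact stmt_1_general (fun X Y => hMonW X Y) (fun X Y => hMonB X Y)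
    (fun c => (hCEw c).le) (fun c => (hCEb c).le) hmw hmb hfair
end

section
/- Suppose τ0 ∈ T minimizes τ ↦ ϱ^b(0,τ) over T and that ϱ^w(0,τ0) and ϱ^b(0,τ0) are finite. Then p* := (ϱ^w(0,τ0) − ϱ^b(0,τ0))/2 satisfies ϱ^w(p*,τ0) = ϱ^b(p*,τ0), and τ0 also minimizes τ ↦ ϱ^b(p*,τ); that is, the equal risk price with commitment exists and equals the center of the interval [−ϱ^b(0,τ0), ϱ^w(0,τ0)]. -/
/-!
A price `p` enters the two minimal risks only as a constant added to the terminal position, so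
translation invariance gives `ϱw(p, τ) = ϱw(0, τ) - p` and `ϱb(p, τ) = ϱb(0, τ) + p`. Hence the
buyer's optimal exercise strategies do not depend on the price, and for a fixed strategy the equal
risk condition is a linear equation in `p`.
-/

lemma iInf_add_coe_ereal {ι : Sort*} (f : ι → EReal) (c : ℝ) :
    ⨅ i, (f i + c) = (⨅ i, f i) + c :=
  have gc : GaloisConnection (fun x : EReal => x - c) (fun x => x + c) := fun _ _ =>
    EReal.sub_le_iff_le_add (.inl (EReal.coe_ne_bot c)) (.inl (EReal.coe_ne_top c))
  gc.u_iInf.symm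

section EqualRisk

variable {Ω : Type*} {ρ ρw ρb : (Ω → ℝ) → EReal} {F G : Ω → ℝ} {A B : Set (Ω → ℝ)}

/-- Translation invariance of a risk measure on positions `Ω → ℝ`, in the sign convention where a
position is a loss: adding the sure amount `c` raises the risk by `c`. The risk may be infinite. -/
def TranslationInvariant (ρ : (Ω → ℝ) → EReal) : Prop :=
  ∀ (Y : Ω → ℝ) (c : ℝ), ρ (fun ω => Y ω + c) = ρ Y + c

/-- The writer's minimal risk `ϱw(p, τ)` for the payoff `F = F_τ` sold at price `p`, when the
attainable terminal hedging wealths are `A = H_τ`. -/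
noncomputable def writerRisk (ρ : (Ω → ℝ) → EReal) (F : Ω → ℝ) (A : Set (Ω → ℝ)) (p : ℝ) : EReal :=
  ⨅ X : A, ρ (fun ω => F ω - (X : Ω → ℝ) ω - p)

/-- The buyer's minimal risk `ϱb(p, τ)` for the payoff `F = F_τ` bought at price `p`, when the
attainable terminal hedging wealths are `A = H_τ`. -/
noncomputable def buyerRisk (ρ : (Ω → ℝ) → EReal) (F : Ω → ℝ) (A : Set (Ω → ℝ)) (p : ℝ) : EReal :=
  ⨅ X : A, ρ (fun ω => -F ω - (X : Ω → ℝ) ω + p)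

lemma TranslationInvariant.iInf_add_const (hρ : TranslationInvariant ρ)
    {ι : Sort*} (Y : ι → Ω → ℝ) (c : ℝ) :
    ⨅ i, ρ (fun ω => Y i ω + c) = (⨅ i, ρ (Y i)) + c := by
  simp_rw [hρ _ c, iInf_add_coe_ereal]

lemma writerRisk_eq_sub (hρ : TranslationInvariant ρ)
    (F : Ω → ℝ) (A : Set (Ω → ℝ)) (p : ℝ) :
    writerRisk ρ F A p = writerRisk ρ F A 0 - p := by
  simp only [writerRisk, sub_zero, sub_eq_add_neg _ p, hρ.iInf_add_const, EReal.coe_neg,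
    sub_eq_add_neg _ (p : EReal)]

lemma buyerRisk_eq_add (hρ : TranslationInvariant ρ)
    (F : Ω → ℝ) (A : Set (Ω → ℝ)) (p : ℝ) :
    buyerRisk ρ F A p = buyerRisk ρ F A 0 + p := by
  simp only [buyerRisk, add_zero, hρ.iInf_add_const]

lemma writerRisk_eq_buyerRisk_iff (hρw : TranslationInvariant ρw)
    (hρb : TranslationInvariant ρb) {w b : ℝ}
    (hw : writerRisk ρw F A 0 = w) (hb : buyerRisk ρb F A 0 = b) {p : ℝ} :
    writerRisk ρw F A p = buyerRisk ρb F A p ↔ p = (w - b) / 2 := by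
  rw [writerRisk_eq_sub hρw, buyerRisk_eq_add hρb, hw, hb, ← EReal.coe_sub, ← EReal.coe_add,
    EReal.coe_eq_coe_iff]
  constructor <;> intro h <;> linarith

lemma buyerRisk_le_buyerRisk_of_zero (hρ : TranslationInvariant ρ)
    (h : buyerRisk ρ F A 0 ≤ buyerRisk ρ G B 0) (p : ℝ) :
    buyerRisk ρ F A p ≤ buyerRisk ρ G B p := by
  rw [buyerRisk_eq_add hρ F, buyerRisk_eq_add hρ G]
  gcongr

theorem stmt_3_general {T : Type*} {F : T → Ω → ℝ} {H : T → Set (Ω → ℝ)}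
    (hρw : TranslationInvariant ρw) (hρb : TranslationInvariant ρb)
    {τ0 : T} (hτ0 : ∀ τ, buyerRisk ρb (F τ0) (H τ0) 0 ≤ buyerRisk ρb (F τ) (H τ) 0)
    {w0 b0 : ℝ} (hw0 : writerRisk ρw (F τ0) (H τ0) 0 = w0)
    (hb0 : buyerRisk ρb (F τ0) (H τ0) 0 = b0) :
    writerRisk ρw (F τ0) (H τ0) ((w0 - b0) / 2) = buyerRisk ρb (F τ0) (H τ0) ((w0 - b0) / 2) ∧
    ∀ τ, buyerRisk ρb (F τ0) (H τ0) ((w0 - b0) / 2) ≤ buyerRisk ρb (F τ) (H τ) ((w0 - b0) / 2) :=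
  ⟨(writerRisk_eq_buyerRisk_iff hρw hρb hw0 hb0).2 rfl,
    fun τ => buyerRisk_le_buyerRisk_of_zero hρb (hτ0 τ) _⟩

end EqualRisk

/-- For an American option with commitment, if `τ0` minimizes the buyer's
minimal risk at price 0 and the two minimal risks at `(0, τ0)` are finite, then the
equal risk price with commitment exists and equals the center of the interval
`[-ϱb(0,τ0), ϱw(0,τ0)]`. -/
theorem stmt_3
    (Ω T : Type*) [Nonempty Ω] [Nonempty T]
    (F : T → Ω → ℝ)
    (H : T → Set (Ω → ℝ)) (hH : ∀ τ, (H τ).Nonempty)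
    (ρw ρb : (Ω → ℝ) → ℝ)
    (hTIw : ∀ (Y : Ω → ℝ) (c : ℝ), ρw (fun ω => Y ω + c) = ρw Y + c)
    (hTIb : ∀ (Y : Ω → ℝ) (c : ℝ), ρb (fun ω => Y ω + c) = ρb Y + c)
    (ϱw ϱb : ℝ → T → EReal)
    (hϱw : ∀ (p : ℝ) (τ : T),
      ϱw p τ = ⨅ X : H τ, ((ρw (fun ω => F τ ω - (X : Ω → ℝ) ω - p) : ℝ) : EReal))
    (hϱb : ∀ (p : ℝ) (τ : T),
      ϱb p τ = ⨅ X : H τ, ((ρb (fun ω => -F τ ω - (X : Ω → ℝ) ω + p) : ℝ) : EReal))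
    (τ0 : T) (hτ0 : ∀ τ : T, ϱb 0 τ0 ≤ ϱb 0 τ)
    (w0 b0 : ℝ) (hw0 : ϱw 0 τ0 = (w0 : EReal)) (hb0 : ϱb 0 τ0 = (b0 : EReal)) :
    ϱw ((w0 - b0) / 2) τ0 = ϱb ((w0 - b0) / 2) τ0 ∧
    (∀ τ : T, ϱb ((w0 - b0) / 2) τ0 ≤ ϱb ((w0 - b0) / 2) τ) := by
  obtain rfl : ϱw = fun p τ => writerRisk (fun Y => (ρw Y : EReal)) (F τ) (H τ) p :=
    funext₂ hϱw
  obtain rfl : ϱb = fun p τ => buyerRisk (fun Y => (ρb Y : EReal)) (F τ) (H τ) p :=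
    funext₂ hϱb
  exact stmt_3_general (fun Y c => by exact_mod_cast hTIw Y c)
    (fun Y c => by exact_mod_cast hTIb Y c) hτ0 hw0 hb0
end

section
/- The dynamic risk measure built from conditionally translation-invariant conditional risk mappings is recursive: for all 0 ≤ k < v ≤ ℓ ≤ K and all functions Z_k,…,Z_ℓ : Ω → ℝ with each Z_{k'} measurable with respect to F_{k'}, one has R_{k,ℓ}(Z_k,…,Z_ℓ) = R_{k,v}(Z_k,…,Z_{v−1}, R_{v,ℓ}(Z_v,…,Z_ℓ)). -/
/-- Composition `ρ_k ∘ ρ_{k+1} ∘ ⋯ ∘ ρ_{k+n-1}` of the conditional risk mappings. -/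
noncomputable def riskComp {Ω : Type*} (ρ : ℕ → (Ω → ℝ) → (Ω → ℝ)) :
    ℕ → ℕ → (Ω → ℝ) → (Ω → ℝ)
  | _, 0 => id
  | k, n + 1 => ρ k ∘ riskComp ρ (k + 1) n

/-- The dynamic risk measure
`R_{k,ℓ}(Z_k,…,Z_ℓ) := ρ_k(ρ_{k+1}(⋯ρ_{ℓ-1}(Z_k + Z_{k+1} + ⋯ + Z_ℓ)⋯))`,
with the convention `R_{ℓ,ℓ}(Z_ℓ) = Z_ℓ`. -/
noncomputable def Rdyn {Ω : Type*} (ρ : ℕ → (Ω → ℝ) → (Ω → ℝ)) (k ℓ : ℕ)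
    (Z : ℕ → Ω → ℝ) : Ω → ℝ :=
  riskComp ρ k (ℓ - k) (fun ω => ∑ i ∈ Finset.Icc k ℓ, Z i ω)

/-!
Split the total cost into `X = Z_k + ⋯ + Z_{v-1}` and `Y = Z_v + ⋯ + Z_ℓ`. Since `X` is
`𝓕 v`-measurable, translation invariance pulls it out of each of `ρ_v, …, ρ_{ℓ-1}`, so
`ρ_k ∘ ⋯ ∘ ρ_{v-1}` ends up applied to `X + R_{v,ℓ}(Z_v, …, Z_ℓ)`.
-/

theorem sum_Ico_add_sum_Icc {ι M : Type*} [LinearOrder ι] [LocallyFiniteOrder ι]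
    [AddCommMonoid M] (f : ι → M) {k v ℓ : ι} (hkv : k ≤ v) (hvℓ : v ≤ ℓ) :
    ∑ i ∈ Finset.Ico k v, f i + ∑ i ∈ Finset.Icc v ℓ, f i = ∑ i ∈ Finset.Icc k ℓ, f i := by
  have hdisj : Disjoint (Finset.Ico k v) (Finset.Icc v ℓ) :=
    Finset.disjoint_left.mpr fun i hi hi' =>
      (Finset.mem_Ico.mp hi).2.not_ge (Finset.mem_Icc.mp hi').1
  have hunion : Finset.Ico k v ∪ Finset.Icc v ℓ = Finset.Icc k ℓ := by
    simpa only [← Finset.coe_inj, Finset.coe_union, Finset.coe_Ico, Finset.coe_Icc]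
      using Set.Ico_union_Icc_eq_Icc hkv hvℓ
  rw [← Finset.sum_union hdisj, hunion]

theorem sum_Icc_ite_eq_right {ι M : Type*} [PartialOrder ι] [LocallyFiniteOrder ι]
    [DecidableEq ι] [AddCommMonoid M] (f : ι → M) (a : M) {k v : ι} (hkv : k ≤ v) :
    ∑ i ∈ Finset.Icc k v, (if i = v then a else f i) = ∑ i ∈ Finset.Ico k v, f i + a := by
  have hIco : ∑ i ∈ Finset.Ico k v, (if i = v then a else f i) = ∑ i ∈ Finset.Ico k v, f i :=
    Finset.sum_congr rfl fun i hi => if_neg (Finset.mem_Ico.mp hi).2.ne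
  rw [← Finset.sum_Ico_add_eq_sum_Icc hkv, if_pos rfl, hIco]

section DynamicRisk

variable {Ω : Type*} {ρ : ℕ → (Ω → ℝ) → (Ω → ℝ)} {Z : ℕ → Ω → ℝ} {k v ℓ : ℕ}

theorem riskComp_add (ρ : ℕ → (Ω → ℝ) → (Ω → ℝ)) (k m n : ℕ) :
    riskComp ρ k (m + n) = riskComp ρ k m ∘ riskComp ρ (k + m) n := by
  induction m generalizing k with
  | zero => rw [Nat.zero_add, Nat.add_zero, riskComp, Function.id_comp]
  | succ m ih =>
    rw [Nat.add_right_comm m 1 n, riskComp, riskComp, ih, Nat.add_right_comm k 1 m,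
      Function.comp_assoc, Nat.add_assoc]

theorem commute_riskComp {g : (Ω → ℝ) → (Ω → ℝ)} {n : ℕ}
    (hg : ∀ j, k ≤ j → j < k + n → Function.Commute (ρ j) g) :
    Function.Commute (riskComp ρ k n) g := by
  induction n generalizing k with
  | zero => exact Function.Commute.id_left
  | succ n ih =>
    have head : Function.Commute (ρ k) g := hg k le_rfl (by omega)
    have tail : Function.Commute (riskComp ρ (k + 1) n) g :=
      ih fun j hkj hjn => hg j (by omega) (by omega)
    exact head.comp_left tail

theorem Rdyn_eq_riskComp_sum (ρ : ℕ → (Ω → ℝ) → (Ω → ℝ)) (k ℓ : ℕ) (Z : ℕ → Ω → ℝ) :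
    Rdyn ρ k ℓ Z = riskComp ρ k (ℓ - k) (∑ i ∈ Finset.Icc k ℓ, Z i) := by
  rw [Rdyn, ← Finset.sum_fn]

theorem Rdyn_eq_Rdyn_of_commute (hkv : k ≤ v) (hvℓ : v ≤ ℓ)
    (hρ : ∀ j, v ≤ j → j < ℓ →
      Function.Commute (ρ j) (∑ i ∈ Finset.Ico k v, Z i + ·)) :
    Rdyn ρ k ℓ Z = Rdyn ρ k v (fun i => if i = v then Rdyn ρ v ℓ Z else Z i) := by
  have hcomm : Function.Commute (riskComp ρ v (ℓ - v)) (∑ i ∈ Finset.Ico k v, Z i + ·) :=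
    commute_riskComp fun j hvj hjℓ => hρ j hvj (by omega)
  have hcomp : riskComp ρ k (ℓ - k) = riskComp ρ k (v - k) ∘ riskComp ρ v (ℓ - v) := by
    rw [← Nat.sub_add_sub_cancel hvℓ hkv, Nat.add_comm, riskComp_add, Nat.add_sub_cancel' hkv]
  calc
    Rdyn ρ k ℓ Z
      = riskComp ρ k (v - k) (riskComp ρ v (ℓ - v)
          (∑ i ∈ Finset.Ico k v, Z i + ∑ i ∈ Finset.Icc v ℓ, Z i)) := by
        rw [Rdyn_eq_riskComp_sum, hcomp, Function.comp_apply, sum_Ico_add_sum_Icc Z hkv hvℓ]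
    _ = riskComp ρ k (v - k) (∑ i ∈ Finset.Ico k v, Z i + Rdyn ρ v ℓ Z) := by
        rw [hcomm.eq, Rdyn_eq_riskComp_sum]
    _ = Rdyn ρ k v (fun i => if i = v then Rdyn ρ v ℓ Z else Z i) := by
        rw [Rdyn_eq_riskComp_sum ρ k v, sum_Icc_ite_eq_right Z _ hkv]

end DynamicRisk

open scoped MeasureTheory in
theorem stmt_5_general {Ω : Type*} {K : ℕ} {𝓕 : ℕ → MeasurableSpace Ω}
    (hFiltration : ∀ i j : ℕ, i ≤ j → j ≤ K → 𝓕 i ≤ 𝓕 j)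
    {ρ : ℕ → (Ω → ℝ) → (Ω → ℝ)}
    (hTI : ∀ k < K, ∀ X Y : Ω → ℝ, Measurable[𝓕 k] X → ρ k (X + Y) = X + ρ k Y)
    {k v ℓ : ℕ} (hkv : k ≤ v) (hvℓ : v ≤ ℓ) (hℓK : ℓ ≤ K)
    {Z : ℕ → Ω → ℝ} (hZ : ∀ i, k ≤ i → i < v → Measurable[𝓕 i] (Z i)) :
    Rdyn ρ k ℓ Z = Rdyn ρ k v (fun i => if i = v then Rdyn ρ v ℓ Z else Z i) := by
  refine Rdyn_eq_Rdyn_of_commute hkv hvℓ fun j hvj hjℓ Y => ?_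
  have past_measurable : Measurable[𝓕 j] (∑ i ∈ Finset.Ico k v, Z i) := by
    rw [Finset.sum_fn]
    refine Finset.measurable_sum _ fun i hi => ?_
    obtain ⟨hki, hiv⟩ := Finset.mem_Ico.mp hi
    exact (hZ i hki hiv).mono (hFiltration i j (by omega) (by omega)) le_rfl
  exact hTI j (by omega) _ Y past_measurable

/-- the dynamic risk measure built from conditionally translation-invariant
conditional risk mappings is recursive: for all `0 ≤ k < v ≤ ℓ ≤ K` and adapted
`Z_k, …, Z_ℓ`, `R_{k,ℓ}(Z_k,…,Z_ℓ) = R_{k,v}(Z_k,…,Z_{v-1}, R_{v,ℓ}(Z_v,…,Z_ℓ))`. -/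
theorem stmt_5 {Ω : Type*} (K : ℕ)
    (𝓕 : ℕ → MeasurableSpace Ω)
    (hFiltration : ∀ i j : ℕ, i ≤ j → j ≤ K → 𝓕 i ≤ 𝓕 j)
    (ρ : ℕ → (Ω → ℝ) → (Ω → ℝ))
    (hTI : ∀ k : ℕ, k < K → ∀ X Y : Ω → ℝ, @Measurable Ω ℝ (𝓕 k) _ X →
      ρ k (fun ω => X ω + Y ω) = fun ω => X ω + ρ k Y ω)
    (hMeas : ∀ k : ℕ, k < K → ∀ Y : Ω → ℝ, @Measurable Ω ℝ (𝓕 k) _ (ρ k Y))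
    (k v ℓ : ℕ) (hkv : k < v) (hvl : v ≤ ℓ) (hℓK : ℓ ≤ K)
    (Z : ℕ → Ω → ℝ) (hZ : ∀ i : ℕ, k ≤ i → i ≤ ℓ → @Measurable Ω ℝ (𝓕 i) _ (Z i)) :
    Rdyn ρ k ℓ Z = Rdyn ρ k v (fun i => if i = v then Rdyn ρ v ℓ Z else Z i) := by
  exact stmt_5_general hFiltration hTI hkv.le hvl hℓK
    fun i hki hiv => hZ i hki (hiv.le.trans hvl)
end

section
/- Let U ⊆ ℝ^K be nonempty, convex and compact. Then U ∩ V(U) is the no-arbitrage subset of U: (1) U ∩ V(U) ⊆ A(U ∩ V(U)); and (2) every convex compact set U' ⊆ U with U' ⊆ A(U') satisfies U' ⊆ U ∩ V(U). -/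
open scoped BigOperators

/-- The length-`k` prefix of `w` belongs to the prefix set `U_{1:k}`
(only the first `k` coordinates of `w` are relevant). -/
def prefixMem {K : ℕ} (U : Set (Fin K → ℝ)) (k : ℕ) (w : ℕ → ℝ) : Prop :=
  ∃ r ∈ U, ∀ i : Fin K, (i : ℕ) < k → r i = w i

/-- The one-step projection `U_{k+1}(w)` of `U` given the length-`k` prefix `w`. -/
def oneStep {K : ℕ} (U : Set (Fin K → ℝ)) (k : ℕ) (w : ℕ → ℝ) : Set ℝ :=
  {s | ∃ r ∈ U, (∀ i : Fin K, (i : ℕ) < k → r i = w i) ∧ ∀ h : k < K, r ⟨k, h⟩ = s}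

/-- The game values `π^U_k(w)`, defined backward from `π^U_K = 0` by
`π^U_k(w) = inf_{ζ ∈ ℝ} sup_{s ∈ U_{k+1}(w)} (-ζ·s + π^U_{k+1}(w⌢s))`,
with values in the extended reals (the supremum over the empty set being `⊥`).
Only the first `k` coordinates of `w` are relevant. -/
noncomputable def piVal {K : ℕ} (U : Set (Fin K → ℝ)) (k : ℕ) (w : ℕ → ℝ) : EReal :=
  if h : k < K then
    ⨅ ζ : ℝ, ⨆ s ∈ oneStep U k w,
      (((-ζ * s : ℝ) : EReal) + piVal U (k + 1) (Function.update w k s))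
  else 0
  termination_by K - k
  decreasing_by omega

/-- A vector `r ∈ ℝ^K` seen as a prefix function `ℕ → ℝ` (padded with zeros). -/
def padR {K : ℕ} (r : Fin K → ℝ) : ℕ → ℝ := fun i => if h : i < K then r ⟨i, h⟩ else 0

/-- `r_{1:k}⌢0_{K-k}`: the first `k` coordinates of `r` padded with zeros. -/
def zeroPad {K : ℕ} (r : Fin K → ℝ) (k : ℕ) : Fin K → ℝ :=
  fun i => if (i : ℕ) < k then r i else 0

/-- A length-`k` prefix `w : ℕ → ℝ` padded with zeros into a vector of `ℝ^K`. -/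
def padPrefix (K : ℕ) (w : ℕ → ℝ) (k : ℕ) : Fin K → ℝ :=
  fun i => if (i : ℕ) < k then w i else 0

/-- `A(U)`: the set of returns with bounded conditional market risk. -/
def Aset {K : ℕ} (U : Set (Fin K → ℝ)) : Set (Fin K → ℝ) :=
  {r | ∀ k : ℕ, k < K → ¬ prefixMem U k (padR r) ∨
    ((⊥ : EReal) < piVal U k (padR r) ∧ piVal U k (padR r) ≤ 0)}

/-- `V(U)`: the set of returns all of whose zero-padded prefixes remain in `U`
(whenever the prefix is realizable in `U`), together with `0 ∈ U`. -/
def Vset {K : ℕ} (U : Set (Fin K → ℝ)) : Set (Fin K → ℝ) :=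
  {r | (0 : Fin K → ℝ) ∈ U ∧
    ∀ k : ℕ, 1 ≤ k → k ≤ K - 1 → zeroPad r k ∈ U ∨ ¬ prefixMem U k (padR r)}

/-!
Playing `ζ = 0` shows that every game value is nonpositive. Hence a game value is `0` as soon as
the market can always answer with a zero return, and it is `⊥` as soon as the possible next returns
are strictly separated from `0`, since the position can then be scaled up without bound. For closed
convex one-step projections, `U ⊆ A(U)` therefore says that every prefix realizable in `U` can be
continued by zeros inside `U`, and `U ∩ V(U)` is the largest subset of `U` with that property.
-/

section Prefixes

variable {K : ℕ} {U : Set (Fin K → ℝ)} {r : Fin K → ℝ} {k : ℕ} {w : ℕ → ℝ}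

@[simp]
lemma padR_val (r : Fin K → ℝ) (i : Fin K) : padR r i = r i := by
  simp [padR]

lemma zeroPad_zero (r : Fin K → ℝ) : zeroPad r 0 = 0 := by
  ext i
  simp [zeroPad]

lemma zeroPad_of_le (r : Fin K → ℝ) (hk : K ≤ k) : zeroPad r k = r :=
  funext fun i => if_pos (i.isLt.trans_le hk)

lemma zeroPad_zeroPad (r : Fin K → ℝ) (j k : ℕ) :
    zeroPad (zeroPad r k) j = zeroPad r (min j k) := by
  ext i
  simp only [zeroPad, lt_min_iff, ite_and]

lemma prefixMem_padR (hr : r ∈ U) (k : ℕ) : prefixMem U k (padR r) :=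
  ⟨r, hr, fun i _ => (padR_val r i).symm⟩

lemma prefixMem_padR_self_iff : prefixMem U K (padR r) ↔ r ∈ U := by
  refine ⟨?_, fun hr => prefixMem_padR hr K⟩
  rintro ⟨q, hq, hqr⟩
  have hq_eq : q = r := funext fun i => (hqr i i.isLt).trans (padR_val r i)
  exact hq_eq ▸ hq

lemma mem_oneStep_iff (hk : k < K) {s : ℝ} :
    s ∈ oneStep U k w ↔
      ∃ r ∈ U, (∀ i : Fin K, (i : ℕ) < k → r i = w i) ∧ r ⟨k, hk⟩ = s := by
  simp only [oneStep, Set.mem_ofPred_eq, hk, forall_true_left]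

lemma oneStep_congr {w' : ℕ → ℝ} (hw : ∀ i : Fin K, (i : ℕ) < k → w i = w' i) :
    oneStep U k w = oneStep U k w' := by
  ext s
  simp +contextual only [oneStep, hw]

lemma mem_oneStep_iff_prefixMem_update (hk : k < K) {s : ℝ} :
    s ∈ oneStep U k w ↔ prefixMem U (k + 1) (Function.update w k s) := by
  rw [mem_oneStep_iff hk]
  refine exists_congr fun r => and_congr_right fun _ => ⟨?_, fun h => ⟨fun i hi => ?_, ?_⟩⟩
  · rintro ⟨hrw, rfl⟩ i hi
    rcases Nat.lt_succ_iff_lt_or_eq.mp hi with hik | rfl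
    · rw [Function.update_of_ne hik.ne, hrw i hik]
    · rw [Function.update_self]
  · rw [h i (hi.trans k.lt_succ_self), Function.update_of_ne hi.ne]
  · rw [h ⟨k, hk⟩ k.lt_succ_self, Function.update_self]

end Prefixes

section OneStepProjections

variable {K : ℕ} {U : Set (Fin K → ℝ)} {k : ℕ}

lemma oneStep_eq_image (hk : k < K) (w : ℕ → ℝ) :
    oneStep U k w = Function.eval (⟨k, hk⟩ : Fin K) ''
      (U ∩ Set.pi {i : Fin K | (i : ℕ) < k} fun i => {w i}) := by
  ext s
  simp only [mem_oneStep_iff hk, Set.mem_image, Set.mem_inter_iff, Set.mem_pi, Set.mem_ofPred_eq,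
    Set.mem_singleton_iff, Function.eval, and_assoc]

lemma convex_oneStep (hU : Convex ℝ U) (hk : k < K) (w : ℕ → ℝ) :
    Convex ℝ (oneStep U k w) := by
  rw [oneStep_eq_image hk]
  exact (hU.inter (convex_pi fun i _ => convex_singleton (w i))).linear_image
    (LinearMap.proj ⟨k, hk⟩)

lemma isCompact_oneStep (hU : IsCompact U) (hk : k < K) (w : ℕ → ℝ) :
    IsCompact (oneStep U k w) := by
  rw [oneStep_eq_image hk]
  exact (hU.inter_right (isClosed_set_pi fun _ _ => isClosed_singleton)).image
    (continuous_apply _)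

end OneStepProjections

section ZeroPadClosed

variable {K : ℕ} {U : Set (Fin K → ℝ)}

/-- Stability of `U` under replacing all returns from some date on by zero. The value `k = 0`
forces `0 ∈ U` when `U` is nonempty, and values `k ≥ K` impose nothing. -/
def IsZeroPadClosed {K : ℕ} (U : Set (Fin K → ℝ)) : Prop :=
  ∀ r ∈ U, ∀ k : ℕ, zeroPad r k ∈ U

lemma IsZeroPadClosed.zero_mem_oneStep (hU : IsZeroPadClosed U) {k : ℕ} {w : ℕ → ℝ}
    (hw : prefixMem U k w) : 0 ∈ oneStep U k w := by
  obtain ⟨r, hr, hrw⟩ := hw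
  exact ⟨zeroPad r k, hU r hr k, fun i hi => (if_pos hi).trans (hrw i hi),
    fun _ => if_neg (lt_irrefl k)⟩

lemma isZeroPadClosed_of_zero_mem_oneStep
    (hU : ∀ r ∈ U, ∀ k < K, 0 ∈ oneStep U k (padR r)) : IsZeroPadClosed U := by
  intro r hr k
  have realizable : ∀ m ≥ k, m ≤ K → prefixMem U m (padR (zeroPad r k)) := by
    intro m hkm
    induction m, hkm using Nat.le_induction with
    | base => exact fun _ => ⟨r, hr, fun i hi => by simp [zeroPad, hi]⟩
    | succ m hkm ih =>
      intro hmK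
      obtain ⟨q, hq, hqr⟩ := ih (Nat.le_of_succ_le hmK)
      have zero_mem : 0 ∈ oneStep U m (padR (zeroPad r k)) := by
        rw [← oneStep_congr fun i hi => ?_]
        · exact hU q hq m hmK
        · rw [padR_val, hqr i hi]
      have update_eq : Function.update (padR (zeroPad r k)) m 0 = padR (zeroPad r k) := by
        simp [padR, zeroPad, hkm.not_gt]
      rwa [mem_oneStep_iff_prefixMem_update hmK, update_eq] at zero_mem
  rcases le_total k K with hk | hk
  · exact prefixMem_padR_self_iff.mp (realizable K hk le_rfl)
  · rwa [zeroPad_of_le r hk]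

lemma mem_inter_Vset_iff {r : Fin K → ℝ} : r ∈ U ∩ Vset U ↔ ∀ k : ℕ, zeroPad r k ∈ U := by
  constructor
  · rintro ⟨hr, zero_mem, hV⟩ k
    rcases k.eq_zero_or_pos with rfl | hk
    · rwa [zeroPad_zero]
    rcases le_or_gt K k with hKk | hkK
    · rwa [zeroPad_of_le r hKk]
    · exact (hV k hk (Nat.le_sub_one_of_lt hkK)).resolve_right
        (not_not_intro (prefixMem_padR hr k))
  · intro h
    exact ⟨zeroPad_of_le r le_rfl ▸ h K, zeroPad_zero r ▸ h 0, fun k _ _ => Or.inl (h k)⟩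

lemma isZeroPadClosed_inter_Vset (U : Set (Fin K → ℝ)) : IsZeroPadClosed (U ∩ Vset U) := by
  intro r hr k
  refine mem_inter_Vset_iff.mpr fun j => ?_
  rw [zeroPad_zeroPad]
  exact mem_inter_Vset_iff.mp hr _

lemma IsZeroPadClosed.subset_inter_Vset {U' : Set (Fin K → ℝ)} (hU' : IsZeroPadClosed U')
    (hsub : U' ⊆ U) : U' ⊆ U ∩ Vset U :=
  fun r hr => mem_inter_Vset_iff.mpr fun k => hsub (hU' r hr k)

end ZeroPadClosed

section GameValues

variable {K : ℕ} {U : Set (Fin K → ℝ)}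

lemma piVal_nonpos (U : Set (Fin K → ℝ)) (k : ℕ) (w : ℕ → ℝ) : piVal U k w ≤ 0 := by
  fun_induction piVal U k w with
  | case1 k w _ ih =>
    refine iInf_le_of_le 0 (iSup₂_le fun s _ => ?_)
    simpa using ih s
  | case2 => exact le_rfl

lemma piVal_nonneg_of_zero_mem_oneStep
    (hU : ∀ k < K, ∀ w, prefixMem U k w → 0 ∈ oneStep U k w)
    {k : ℕ} {w : ℕ → ℝ} (hw : prefixMem U k w) : 0 ≤ piVal U k w := by
  fun_induction piVal U k w with
  | case1 k w hk ih =>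
    have zero_mem := hU k hk w hw
    refine le_iInf fun ζ => le_iSup₂_of_le 0 zero_mem ?_
    simpa using ih 0 ((mem_oneStep_iff_prefixMem_update hk).mp zero_mem)
  | case2 => exact le_rfl

lemma exists_forall_one_le_mul {S : Set ℝ} (hconv : Convex ℝ S) (hclosed : IsClosed S)
    (h0 : (0 : ℝ) ∉ S) : ∃ c : ℝ, ∀ s ∈ S, 1 ≤ c * s := by
  obtain ⟨f, u, hu, hf⟩ := geometric_hahn_banach_point_closed hconv hclosed h0
  rw [map_zero] at hu
  refine ⟨f 1 / u, fun s hs => ?_⟩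
  have f_eq : f s = f 1 * s := by
    simpa [mul_comm] using f.map_smul s 1
  rw [div_mul_eq_mul_div, ← f_eq, one_le_div hu]
  exact (hf s hs).le

lemma piVal_eq_bot_of_forall_one_le_mul {k : ℕ} {w : ℕ → ℝ} (hk : k < K) {c : ℝ}
    (hc : ∀ s ∈ oneStep U k w, 1 ≤ c * s) : piVal U k w = ⊥ := by
  refine EReal.eq_bot_iff_forall_lt _ |>.mpr fun y => ?_
  obtain ⟨M, hM_nonneg, hM⟩ : ∃ M : ℝ, 0 ≤ M ∧ -M < y :=
    ⟨|y| + 1, by positivity, by linarith [neg_abs_le y]⟩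
  refine lt_of_le_of_lt ?_ (EReal.coe_lt_coe_iff.mpr hM)
  rw [piVal, dif_pos hk]
  refine iInf_le_of_le (M * c) (iSup₂_le fun s hs => ?_)
  have payoff_le : -(M * c) * s ≤ -M := by
    linarith [mul_le_mul_of_nonneg_left (hc s hs) hM_nonneg]
  calc ((-(M * c) * s : ℝ) : EReal) + piVal U (k + 1) (Function.update w k s)
      ≤ ((-M : ℝ) : EReal) + 0 :=
        add_le_add (EReal.coe_le_coe_iff.mpr payoff_le) (piVal_nonpos U _ _)
    _ = ((-M : ℝ) : EReal) := add_zero _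

lemma zero_mem_oneStep_of_bot_lt_piVal {k : ℕ} {w : ℕ → ℝ} (hk : k < K)
    (hconv : Convex ℝ (oneStep U k w)) (hclosed : IsClosed (oneStep U k w))
    (hpi : ⊥ < piVal U k w) : 0 ∈ oneStep U k w := by
  by_contra h0
  obtain ⟨c, hc⟩ := exists_forall_one_le_mul hconv hclosed h0
  exact hpi.ne' (piVal_eq_bot_of_forall_one_le_mul hk hc)

end GameValues

section NoArbitrage

variable {K : ℕ} {U : Set (Fin K → ℝ)}

lemma IsZeroPadClosed.subset_Aset (hU : IsZeroPadClosed U) : U ⊆ Aset U := by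
  intro r hr k _
  have nonneg : 0 ≤ piVal U k (padR r) :=
    piVal_nonneg_of_zero_mem_oneStep (fun _ _ _ => hU.zero_mem_oneStep) (prefixMem_padR hr k)
  exact Or.inr ⟨EReal.bot_lt_zero.trans_le nonneg, piVal_nonpos U k _⟩

lemma isZeroPadClosed_of_subset_Aset (hconv : ∀ k < K, ∀ w, Convex ℝ (oneStep U k w))
    (hclosed : ∀ k < K, ∀ w, IsClosed (oneStep U k w)) (hA : U ⊆ Aset U) :
    IsZeroPadClosed U := by
  refine isZeroPadClosed_of_zero_mem_oneStep fun r hr k hk => ?_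
  have bounded_risk := (hA hr k hk).resolve_left (not_not_intro (prefixMem_padR hr k))
  exact zero_mem_oneStep_of_bot_lt_piVal hk (hconv k hk _) (hclosed k hk _) bounded_risk.1

end NoArbitrage

theorem stmt_7_general {K : ℕ} (U : Set (Fin K → ℝ)) :
    (U ∩ Vset U ⊆ Aset (U ∩ Vset U)) ∧
    (∀ U' : Set (Fin K → ℝ), U' ⊆ U → (∀ k < K, ∀ w, Convex ℝ (oneStep U' k w)) →
      (∀ k < K, ∀ w, IsClosed (oneStep U' k w)) → U' ⊆ Aset U' → U' ⊆ U ∩ Vset U) :=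
  ⟨(isZeroPadClosed_inter_Vset U).subset_Aset, fun _ hsub hconv hclosed hA =>
    (isZeroPadClosed_of_subset_Aset hconv hclosed hA).subset_inter_Vset hsub⟩

/-- for a nonempty, convex and compact uncertainty set `U ⊆ ℝ^K`,
`U ∩ V(U)` is the no-arbitrage subset of `U`: it is contained in `A(U ∩ V(U))`,
and it contains every convex compact subset `U' ⊆ U` with `U' ⊆ A(U')`. -/
theorem stmt_7 {K : ℕ} (U : Set (Fin K → ℝ))
    (hne : U.Nonempty) (hconv : Convex ℝ U) (hcomp : IsCompact U) :
    (U ∩ Vset U ⊆ Aset (U ∩ Vset U)) ∧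
    (∀ U' : Set (Fin K → ℝ), U' ⊆ U → Convex ℝ U' → IsCompact U' →
      U' ⊆ Aset U' → U' ⊆ U ∩ Vset U) :=
  ⟨(stmt_7_general U).1, fun U' hsub hconv' hcomp' =>
    (stmt_7_general U).2 U' hsub (fun _ => convex_oneStep hconv')
      fun _ hk w => (isCompact_oneStep hcomp' hk w).isClosed⟩
end

section
/- For every k ∈ {0,…,K−1} and every prefix w ∈ (U_2)_{1:k}, the game value satisfies π^{U_2}_k(w) = 0 (the proof uses that each one-step projection (U_2)_{k+1}(w) of a realizable prefix is nonempty and symmetric about 0, since the constraints defining U_2 depend on the returns only through their squares); consequently A(U_2) = ℝ^K, i.e., the worst-case risk measure built on U_2 satisfies the bounded conditional market risk property. -/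
open scoped BigOperators

/-!
If a set `A ⊆ ℝ` is nonempty and symmetric about `0`, then no position `ζ` makes `-ζ * s` negative
throughout `A`, while `ζ = 0` costs nothing; hence `inf_ζ sup_{s ∈ A} (-ζ * s) = 0`. Extending a
realizable prefix by an element of its one-step projection gives a realizable prefix, so by backward
induction the continuation values are all `0` and every step of the game reduces to this one-period
problem. A set whose constraints only involve the squared coordinates has symmetric one-step
projections, because the sign of a single coordinate can be flipped.
-/

/-- A set of vectors is unconditional if membership only depends on the absolute values of the
coordinates, expressed here through their squares. This is the symmetry of `U_2` that makes its
one-step projections symmetric about `0`. -/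
def IsUnconditional {ι : Type*} (U : Set (ι → ℝ)) : Prop :=
  ∀ ⦃r⦄, r ∈ U → ∀ ⦃r' : ι → ℝ⦄, (∀ i, r' i ^ 2 = r i ^ 2) → r' ∈ U

theorem iInf_iSup_neg_mul_eq_zero {A : Set ℝ} (hne : A.Nonempty) (hsymm : ∀ s ∈ A, -s ∈ A) :
    ⨅ ζ : ℝ, ⨆ s ∈ A, ((-ζ * s : ℝ) : EReal) = 0 := by
  apply le_antisymm
  · exact iInf_le_of_le 0 (iSup₂_le fun s _ => by simp)
  · refine le_iInf fun ζ => ?_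
    obtain ⟨s, hs, hζs⟩ : ∃ s ∈ A, 0 ≤ -ζ * s := by
      obtain ⟨s, hs⟩ := hne
      rcases le_total 0 (-ζ * s) with hnonneg | hnonpos
      · exact ⟨s, hs, hnonneg⟩
      · exact ⟨-s, hsymm s hs, by linarith⟩
    exact le_iSup₂_of_le s hs (EReal.coe_nonneg.mpr hζs)

section Game

variable {K k : ℕ} {U : Set (Fin K → ℝ)} {w : ℕ → ℝ} {s : ℝ}

theorem prefixMem.oneStep_nonempty (hw : prefixMem U k w) (hk : k < K) :
    (oneStep U k w).Nonempty := by
  obtain ⟨r, hr, hrw⟩ := hw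
  exact ⟨r ⟨k, hk⟩, r, hr, hrw, fun _ => rfl⟩

theorem prefixMem_succ_update (hs : s ∈ oneStep U k w) :
    prefixMem U (k + 1) (Function.update w k s) := by
  obtain ⟨r, hr, hrw, hrs⟩ := hs
  refine ⟨r, hr, fun i hi => ?_⟩
  rcases Nat.lt_succ_iff_lt_or_eq.mp hi with hlt | rfl
  · rw [Function.update_of_ne hlt.ne, hrw i hlt]
  · rw [Function.update_self, ← hrs i.isLt]

theorem IsUnconditional.neg_mem_oneStep (hU : IsUnconditional U) (hs : s ∈ oneStep U k w) :
    -s ∈ oneStep U k w := by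
  obtain ⟨r, hr, hrw, hrs⟩ := hs
  refine ⟨fun i => if (i : ℕ) = k then -r i else r i, hU hr fun i => ?_, fun i hi => ?_,
    fun hk => ?_⟩
  · split_ifs <;> simp
  · simp [hi.ne, hrw i hi]
  · simp [hrs hk]

theorem piVal_eq_zero_of_neg_mem_oneStep
    (hsymm : ∀ k < K, ∀ w, prefixMem U k w → ∀ s ∈ oneStep U k w, -s ∈ oneStep U k w)
    (hw : prefixMem U k w) : piVal U k w = 0 := by
  fun_induction piVal U k w with
  | case1 k w hk continuation_eq_zero =>
    calc ⨅ ζ : ℝ, ⨆ s ∈ oneStep U k w,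
          (((-ζ * s : ℝ) : EReal) + piVal U (k + 1) (Function.update w k s))
        = ⨅ ζ : ℝ, ⨆ s ∈ oneStep U k w, ((-ζ * s : ℝ) : EReal) :=
          iInf_congr fun ζ => biSup_congr fun s hs => by
            rw [continuation_eq_zero s (prefixMem_succ_update hs), add_zero]
      _ = 0 := iInf_iSup_neg_mul_eq_zero (hw.oneStep_nonempty hk) (hsymm k hk w hw)
  | case2 => rfl

theorem Aset_eq_univ_of_piVal_eq_zero
    (hzero : ∀ k < K, ∀ w, prefixMem U k w → piVal U k w = 0) : Aset U = Set.univ := by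
  refine Set.eq_univ_of_forall fun r k hk => or_iff_not_imp_left.mpr fun hmem => ?_
  rw [hzero k hk _ (not_not.mp hmem)]
  exact ⟨EReal.bot_lt_zero, le_rfl⟩

end Game

theorem stmt_14_general {K : ℕ} {U : Set (Fin K → ℝ)}
    (hsymm : ∀ k < K, ∀ w, prefixMem U k w → ∀ s ∈ oneStep U k w, -s ∈ oneStep U k w) :
    (∀ k < K, ∀ w, prefixMem U k w → piVal U k w = 0) ∧ Aset U = Set.univ := by
  have hzero : ∀ k < K, ∀ w, prefixMem U k w → piVal U k w = 0 :=
    fun _ _ _ hw => piVal_eq_zero_of_neg_mem_oneStep hsymm hw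
  exact ⟨hzero, Aset_eq_univ_of_piVal_eq_zero hzero⟩

/-- for the uncertainty set `U_2` (whose constraints depend on the returns
only through their squares), the game value of every realizable prefix is `0`;
consequently `A(U_2) = ℝ^K`, i.e. the worst-case risk measure built on `U_2` satisfies
the bounded conditional market risk property. -/
theorem stmt_14 (S N : ℕ) (hS : 1 ≤ S) (hN : 1 ≤ N) (K : ℕ) (hK : K = S * N)
    (σ T Γ : ℝ) (hσ : 0 ≤ σ) (hT : 0 < T) (hΓ : 0 ≤ Γ)
    (U2 : Set (Fin K → ℝ))
    (hU2 : U2 = {r | ∀ s : ℕ, 1 ≤ s → s ≤ S →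
      σ ^ 2 * s * T / S - Γ * Real.sqrt (s * N)
          ≤ ∑ i ∈ Finset.univ.filter (fun i : Fin K => (i : ℕ) < s * N), (r i) ^ 2 ∧
      ∑ i ∈ Finset.univ.filter (fun i : Fin K => (i : ℕ) < s * N), (r i) ^ 2
          ≤ σ ^ 2 * s * T / S + Γ * Real.sqrt (s * N)}) :
    (∀ k : ℕ, k < K → ∀ w : ℕ → ℝ, prefixMem U2 k w → piVal U2 k w = 0) ∧
    Aset U2 = Set.univ := by
  have hU : IsUnconditional U2 := fun r hr r' hsq => by
    simpa only [hU2, Set.mem_ofPred_eq, hsq] using hr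
  exact stmt_14_general fun _ _ _ _ _ hs => hU.neg_mem_oneStep hs
end

section
/- For every p_0 ∈ ℝ, the writer's minimal worst-case risk equals ϱ^w(p_0) = −p_0 + (S_0 − l)(u − Kstr)/(u − l), and the infimum over ξ is attained at ξ* = (u − Kstr)/(u − l). -/
/-!
The loss of a hedged convex claim is a convex function of the terminal price, so its worst case
over `[l, u]` is the larger of its two endpoint values. Weighting the endpoints so that the stock
has mean `S₀` makes the hedge cost nothing: the weighted endpoint loss is the same for every `ξ`,
and it bounds the worst case from below. The slope of the secant through the endpoints of the payoff
equalises the two endpoint losses, hence attains this bound.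
-/

open Set

section Convex

variable {𝕜 β : Type*} [Field 𝕜] [LinearOrder 𝕜] [IsStrictOrderedRing 𝕜]
  [AddCommGroup β] [LinearOrder β] [IsOrderedAddMonoid β] [Module 𝕜 β] [IsStrictOrderedModule 𝕜 β]

theorem isGreatest_image_Icc_of_convexOn {g : 𝕜 → β} {a b : 𝕜} (hab : a ≤ b)
    (hg : ConvexOn 𝕜 (Icc a b) g) : IsGreatest (g '' Icc a b) (max (g a) (g b)) := by
  have ha : a ∈ Icc a b := left_mem_Icc.2 hab
  have hb : b ∈ Icc a b := right_mem_Icc.2 hab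
  refine ⟨?_, ?_⟩
  · rcases max_choice (g a) (g b) with h | h <;> rw [h]
    exacts [mem_image_of_mem g ha, mem_image_of_mem g hb]
  · rintro _ ⟨x, hx, rfl⟩
    exact hg.le_max_of_mem_Icc ha hb hx

end Convex

section SecantLine

variable {𝕜 : Type*} [Field 𝕜]

/-- The secant line of `f` through `a` and `b`, evaluated at `x`. For a claim with payoff `f` on a
stock moving from `x` to `a` or `b`, it is the replication price. As `slope f a a = 0`, it is
constant when `a = b`. -/
def secantLine (f : 𝕜 → 𝕜) (a b x : 𝕜) : 𝕜 :=
  f a + slope f a b * (x - a)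

theorem secantLine_eq_right_add (f : 𝕜 → 𝕜) (a b x : 𝕜) :
    secantLine f a b x = f b + slope f a b * (x - b) := by
  have hslope : (b - a) * slope f a b = f b - f a := sub_smul_slope f a b
  unfold secantLine
  linear_combination hslope

theorem secantLine_le_max [LinearOrder 𝕜] [IsStrictOrderedRing 𝕜] (f : 𝕜 → 𝕜) {a b x : 𝕜}
    (hx : x ∈ Icc a b) : secantLine f a b x ≤ max (f a) (f b) := by
  rcases le_total (slope f a b) 0 with hslope | hslope
  · refine le_max_of_le_left (add_le_of_nonpos_right ?_)
    exact mul_nonpos_of_nonpos_of_nonneg hslope (sub_nonneg.2 hx.1)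
  · rw [secantLine_eq_right_add]
    refine le_max_of_le_right (add_le_of_nonpos_right ?_)
    exact mul_nonpos_of_nonneg_of_nonpos hslope (sub_nonpos.2 hx.2)

end SecantLine

section HedgedLoss

variable {𝕜 : Type*} [Field 𝕜]

/-- The loss at terminal stock price `S1` of a writer who sells the claim `f` for `p0` and holds
`ξ` shares bought at `S0`. -/
def hedgedLoss (f : 𝕜 → 𝕜) (p0 S0 ξ S1 : 𝕜) : 𝕜 :=
  f S1 - p0 - ξ * (S1 - S0)

theorem convexOn_hedgedLoss [LinearOrder 𝕜] [IsStrictOrderedRing 𝕜] {f : 𝕜 → 𝕜} {s : Set 𝕜}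
    (hf : ConvexOn 𝕜 s f) (p0 S0 ξ : 𝕜) : ConvexOn 𝕜 s (hedgedLoss f p0 S0 ξ) := by
  have hlinear : ConvexOn 𝕜 s fun S => -ξ * S := (LinearMap.mulLeft 𝕜 (-ξ)).convexOn hf.1
  refine ((hf.add hlinear).add_const (-p0 + ξ * S0)).congr fun S _ => ?_
  simp only [Pi.add_apply, hedgedLoss]
  ring

theorem secantLine_hedgedLoss (f : 𝕜 → 𝕜) {l u : 𝕜} (hlu : l ≠ u) (p0 S0 ξ : 𝕜) :
    secantLine (hedgedLoss f p0 S0 ξ) l u S0 = -p0 + secantLine f l u S0 := by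
  have hslope : slope (hedgedLoss f p0 S0 ξ) l u = slope f l u - ξ := by
    have hul : u - l ≠ 0 := sub_ne_zero.2 hlu.symm
    simp only [slope_def_field, hedgedLoss]
    field_simp
    ring
  rw [secantLine, hslope, secantLine, hedgedLoss]
  ring

theorem hedgedLoss_slope_left (f : 𝕜 → 𝕜) (p0 S0 l u : 𝕜) :
    hedgedLoss f p0 S0 (slope f l u) l = -p0 + secantLine f l u S0 := by
  rw [hedgedLoss, secantLine]
  ring

theorem hedgedLoss_slope_right (f : 𝕜 → 𝕜) (p0 S0 l u : 𝕜) :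
    hedgedLoss f p0 S0 (slope f l u) u = -p0 + secantLine f l u S0 := by
  rw [hedgedLoss, secantLine_eq_right_add]
  ring

end HedgedLoss

section CallPayoff

variable {𝕜 : Type*} [Field 𝕜] [LinearOrder 𝕜]

/-- The payoff of a European call with strike `K` at terminal stock price `S`. -/
def callPayoff (K S : 𝕜) : 𝕜 :=
  max (S - K) 0

theorem convexOn_callPayoff [IsStrictOrderedRing 𝕜] (K : 𝕜) {s : Set 𝕜} (hs : Convex 𝕜 s) :
    ConvexOn 𝕜 s (callPayoff K) :=
  ((convexOn_id hs).sub (concaveOn_const K hs)).sup (convexOn_const 0 hs)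

variable [IsOrderedAddMonoid 𝕜] {K l u : 𝕜}

theorem callPayoff_of_le (h : l ≤ K) : callPayoff K l = 0 :=
  max_eq_right (sub_nonpos.2 h)

theorem callPayoff_of_ge (h : K ≤ u) : callPayoff K u = u - K :=
  max_eq_left (sub_nonneg.2 h)

theorem slope_callPayoff (hl : l ≤ K) (hu : K ≤ u) :
    slope (callPayoff K) l u = (u - K) / (u - l) := by
  rw [slope_def_field, callPayoff_of_le hl, callPayoff_of_ge hu, sub_zero]

theorem secantLine_callPayoff (hl : l ≤ K) (hu : K ≤ u) (S : 𝕜) :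
    secantLine (callPayoff K) l u S = (S - l) * (u - K) / (u - l) := by
  rw [secantLine, slope_callPayoff hl hu, callPayoff_of_le hl]
  ring

end CallPayoff

theorem sSup_hedgedLoss_image_Icc {f : ℝ → ℝ} {l u : ℝ} (hlu : l ≤ u)
    (hf : ConvexOn ℝ (Icc l u) f) (p0 S0 ξ : ℝ) :
    sSup (hedgedLoss f p0 S0 ξ '' Icc l u) =
      max (hedgedLoss f p0 S0 ξ l) (hedgedLoss f p0 S0 ξ u) :=
  (isGreatest_image_Icc_of_convexOn hlu (convexOn_hedgedLoss hf p0 S0 ξ)).csSup_eq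

theorem stmt_15_general {f : ℝ → ℝ} {l u S0 : ℝ} (hlu : l < u) (hS0 : S0 ∈ Icc l u)
    (hf : ConvexOn ℝ (Icc l u) f) (p0 : ℝ) :
    sInf (range fun ξ => sSup (hedgedLoss f p0 S0 ξ '' Icc l u)) = -p0 + secantLine f l u S0 ∧
      sSup (hedgedLoss f p0 S0 (slope f l u) '' Icc l u) = -p0 + secantLine f l u S0 := by
  have attained : sSup (hedgedLoss f p0 S0 (slope f l u) '' Icc l u) =
      -p0 + secantLine f l u S0 := by
    rw [sSup_hedgedLoss_image_Icc hlu.le hf, hedgedLoss_slope_left, hedgedLoss_slope_right,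
      max_self]
  have lower_bound (ξ : ℝ) :
      -p0 + secantLine f l u S0 ≤ sSup (hedgedLoss f p0 S0 ξ '' Icc l u) := by
    rw [sSup_hedgedLoss_image_Icc hlu.le hf, ← secantLine_hedgedLoss f hlu.ne p0 S0 ξ]
    exact secantLine_le_max _ hS0
  exact ⟨IsLeast.csInf_eq ⟨⟨slope f l u, attained⟩, forall_mem_range.2 lower_bound⟩, attained⟩

/-- in the one-period worst-case model, the writer's minimal worst-case
risk is `ϱ^w(p₀) = -p₀ + (S₀ - l)(u - Kstr)/(u - l)`, and the infimum over the hedging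
position `ξ` is attained at `ξ* = (u - Kstr)/(u - l)`. -/
theorem stmt_15 (l u S0 Kstr : ℝ) (hlu : l < u)
    (hS0l : l ≤ S0) (hS0u : S0 ≤ u) (hKl : l ≤ Kstr) (hKu : Kstr ≤ u) :
    ∀ p0 : ℝ,
      sInf (Set.range fun ξ : ℝ =>
          sSup ((fun S1 : ℝ => max (S1 - Kstr) 0 - p0 - ξ * (S1 - S0)) '' Set.Icc l u))
        = -p0 + (S0 - l) * (u - Kstr) / (u - l) ∧
      sSup ((fun S1 : ℝ => max (S1 - Kstr) 0 - p0 - ((u - Kstr) / (u - l)) * (S1 - S0))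
          '' Set.Icc l u)
        = -p0 + (S0 - l) * (u - Kstr) / (u - l) := by
  rw [← secantLine_callPayoff hKl hKu, ← slope_callPayoff hKl hKu]
  exact stmt_15_general hlu ⟨hS0l, hS0u⟩ (convexOn_callPayoff Kstr (convex_Icc l u))
end
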